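/- Suppose the feasible allocation x satisfies the Nashian Greedy condition and the valuations have unit monopolist utilities. Let −1 ≤ p < 0, let x* be a feasible allocation with U*_a = ∫_0^T v a s · x*_a s ds > 0 for every agent a, and let W = ((1/n) ∑_a (U*_a)^p)^{1/p}. Then ((1/n) ∑_a (U a T)^p)^{1/p} ≥ (|p|/(|p|+1))^{1/|p|} · n^{−|p|/(|p|+1)} · (log(n+1))^{−1/(|p|+1)} · W. -/

import Mathlib

/-!
Write `q = -p`, `u a = U a T`, `w a = Ustar a` and let `c` be the base utility. The greedy rule
maximises the growth rate of `∑ a, log (U a)`, so this rate dominates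
`∑ a, v a * xstar a / U a ≥ ∑ a, v a * xstar a / u a`. Integrating,
`∑ a, w a / u a ≤ ∑ a, log (u a / c) ≤ n * L` with `L = log (1 / c + 1)`.

To pass to `p`-means, apply weighted AM-GM to `w a ^ (-q)` and `(w a / u a) / L` with weights
`1 / (q + 1)` and `q / (q + 1)`: since `u a ≥ c`, this bounds `u a ^ (-q)` by
`K = (c ^ (-q) * L) ^ (q / (q + 1))` times the arithmetic mean. Summed over `a`, the second terms
contribute at most `n ≤ ∑ a, w a ^ (-q)`, as `w a ≤ 1`, so that `∑ a, u a ^ (-q)` is at most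
`K * ∑ a, w a ^ (-q)`. This works for every `p < 0` and without the factor
`(|p| / (|p| + 1)) ^ (1 / |p|) ≤ 1`.
-/

open MeasureTheory Real

section PowerMean

variable {ι : Type*} [Fintype ι]

/-- The `p`-mean of the family `u`; meaningful for `p ≠ 0`, positive `u` and nonempty `ι`. -/
noncomputable def powerMean (p : ℝ) (u : ι → ℝ) : ℝ :=
  ((1 / (Fintype.card ι : ℝ)) * ∑ a, u a ^ p) ^ (1 / p)

lemma powerMean_nonneg (p : ℝ) {u : ι → ℝ} (hu : ∀ a, 0 ≤ u a) : 0 ≤ powerMean p u :=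
  rpow_nonneg (mul_nonneg (by positivity) (Finset.sum_nonneg fun a _ => rpow_nonneg (hu a) p)) _

lemma rpow_mul_powerMean_le_powerMean [Nonempty ι] {p K : ℝ} (hp : p < 0) (hK : 0 ≤ K)
    {u w : ι → ℝ} (hu : ∀ a, 0 < u a) (hw : ∀ a, 0 ≤ w a)
    (h : ∑ a, u a ^ p ≤ K * ∑ a, w a ^ p) :
    K ^ (1 / p) * powerMean p w ≤ powerMean p u := by
  have hsum_u : 0 < ∑ a, u a ^ p :=
    Finset.sum_pos (fun a _ => rpow_pos_of_pos (hu a) p) Finset.univ_nonempty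
  have hsum_w : 0 ≤ ∑ a, w a ^ p := Finset.sum_nonneg fun a _ => rpow_nonneg (hw a) p
  unfold powerMean
  rw [← mul_rpow hK (by positivity)]
  refine rpow_le_rpow_of_nonpos (by positivity) ?_ (one_div_neg.2 hp).le
  rw [mul_left_comm]
  gcongr

lemma rpow_neg_le_mul_weighted_mean {q c L u w : ℝ} (hq : 0 < q) (hc : 0 < c) (hL : 0 < L)
    (hu : c ≤ u) (hw : 0 < w) :
    u ^ (-q) ≤ (c ^ (-q) * L) ^ (q / (q + 1)) *
      (1 / (q + 1) * w ^ (-q) + q / (q + 1) * (w / u / L)) := by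
  have hu0 : 0 < u := hc.trans_le hu
  have hweights : 1 / (q + 1) + q / (q + 1) = 1 := by field_simp; ring
  have hexp : -q * (1 / (q + 1)) = -(q / (q + 1)) := by ring
  have hamgm : (w ^ (-q)) ^ (1 / (q + 1)) * (w / u / L) ^ (q / (q + 1)) ≤
      1 / (q + 1) * w ^ (-q) + q / (q + 1) * (w / u / L) :=
    geom_mean_le_arith_mean2_weighted (by positivity) (by positivity) (by positivity)
      (by positivity) hweights
  have hgeom : (u ^ (-q)) ^ (1 / (q + 1)) * L ^ (-(q / (q + 1))) =
      (w ^ (-q)) ^ (1 / (q + 1)) * (w / u / L) ^ (q / (q + 1)) := by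
    rw [div_rpow (by positivity) hL.le, div_rpow hw.le hu0.le, ← rpow_mul hu0.le,
      ← rpow_mul hw.le, hexp, rpow_neg hu0.le, rpow_neg hw.le, rpow_neg hL.le]
    field_simp
  calc u ^ (-q)
      = (u ^ (-q)) ^ (q / (q + 1)) * (u ^ (-q)) ^ (1 / (q + 1)) := by
        rw [← rpow_add (by positivity), add_comm, hweights, rpow_one]
    _ ≤ (c ^ (-q)) ^ (q / (q + 1)) * (u ^ (-q)) ^ (1 / (q + 1)) := by
        have : u ^ (-q) ≤ c ^ (-q) := rpow_le_rpow_of_nonpos hc hu (by linarith)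
        gcongr
    _ = (c ^ (-q) * L) ^ (q / (q + 1)) *
          ((u ^ (-q)) ^ (1 / (q + 1)) * L ^ (-(q / (q + 1)))) := by
        rw [mul_rpow (by positivity) hL.le, rpow_neg hL.le]
        field_simp
    _ ≤ _ := by
        rw [hgeom]
        gcongr

lemma sum_rpow_neg_le_mul_sum_rpow_neg {q c L : ℝ} (hq : 0 < q) (hc : 0 < c) (hL : 0 < L)
    {u w : ι → ℝ} (hu : ∀ a, c ≤ u a) (hw : ∀ a, 0 < w a) (hw_le : ∀ a, w a ≤ 1)
    (hsum : ∑ a, w a / u a ≤ Fintype.card ι * L) :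
    ∑ a, u a ^ (-q) ≤ (c ^ (-q) * L) ^ (q / (q + 1)) * ∑ a, w a ^ (-q) := by
  have hcard : (Fintype.card ι : ℝ) ≤ ∑ a, w a ^ (-q) := by
    simpa using Finset.sum_le_sum fun a (_ : a ∈ Finset.univ) =>
      one_le_rpow_of_pos_of_le_one_of_nonpos (hw a) (hw_le a) (neg_nonpos.2 hq.le)
  have hratio : ∑ a, w a / u a / L ≤ ∑ a, w a ^ (-q) := by
    rw [← Finset.sum_div]
    exact ((div_le_iff₀ hL).2 hsum).trans hcard
  calc ∑ a, u a ^ (-q)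
      ≤ ∑ a, (c ^ (-q) * L) ^ (q / (q + 1)) *
          (1 / (q + 1) * w a ^ (-q) + q / (q + 1) * (w a / u a / L)) :=
        Finset.sum_le_sum fun a _ => rpow_neg_le_mul_weighted_mean hq hc hL (hu a) (hw a)
    _ = (c ^ (-q) * L) ^ (q / (q + 1)) *
          (1 / (q + 1) * ∑ a, w a ^ (-q) + q / (q + 1) * ∑ a, w a / u a / L) := by
        simp only [Finset.mul_sum, mul_add, Finset.sum_add_distrib]
    _ ≤ (c ^ (-q) * L) ^ (q / (q + 1)) *
          (1 / (q + 1) * ∑ a, w a ^ (-q) + q / (q + 1) * ∑ a, w a ^ (-q)) := by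
        gcongr
    _ = (c ^ (-q) * L) ^ (q / (q + 1)) * ∑ a, w a ^ (-q) := by
        field_simp
        ring

lemma powerMean_ge_of_sum_div_le [Nonempty ι] {p c L : ℝ} (hp : p < 0) (hc : 0 < c) (hL : 0 < L)
    {u w : ι → ℝ} (hu : ∀ a, c ≤ u a) (hw : ∀ a, 0 < w a) (hw_le : ∀ a, w a ≤ 1)
    (hsum : ∑ a, w a / u a ≤ Fintype.card ι * L) :
    c ^ (|p| / (|p| + 1)) * L ^ (-(1 / (|p| + 1))) * powerMean p w ≤ powerMean p u := by
  obtain ⟨q, rfl⟩ : ∃ q, p = -q := ⟨-p, (neg_neg p).symm⟩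
  have hq : 0 < q := neg_neg_iff_pos.1 hp
  rw [abs_neg, abs_of_pos hq]
  have hK : ((c ^ (-q) * L) ^ (q / (q + 1))) ^ (1 / -q) =
      c ^ (q / (q + 1)) * L ^ (-(1 / (q + 1))) := by
    have hexp : q / (q + 1) * (1 / -q) = -(1 / (q + 1)) := by field_simp
    rw [← rpow_mul (by positivity), hexp, mul_rpow (by positivity) hL.le, ← rpow_mul hc.le,
      neg_mul_neg, mul_one_div]
  rw [← hK]
  exact rpow_mul_powerMean_le_powerMean hp (by positivity) (fun a => hc.trans_le (hu a))
    (fun a => (hw a).le) (sum_rpow_neg_le_mul_sum_rpow_neg hq hc hL hu hw hw_le hsum)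

end PowerMean

section Primitive

variable {a b c : ℝ} {f F : ℝ → ℝ}

lemma monotoneOn_primitive_of_nonneg (hf : IntervalIntegrable f volume a b)
    (hf_nonneg : ∀ᵐ s ∂(volume.restrict (Set.Icc a b)), 0 ≤ f s)
    (hF : ∀ t, F t = c + ∫ s in a..t, f s) : MonotoneOn F (Set.Icc a b) := by
  intro s hs t ht hst
  have hft : IntervalIntegrable f volume a t := hf.mono_set <| by
    rw [Set.uIcc_of_le ht.1, Set.uIcc_of_le (ht.1.trans ht.2)]
    exact Set.Icc_subset_Icc_right ht.2
  rw [hF s, hF t]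
  gcongr
  exact intervalIntegral.integral_mono_interval le_rfl hs.1 hst
    (ae_restrict_of_ae_restrict_of_subset
      (Set.Ioc_subset_Icc_self.trans (Set.Icc_subset_Icc_right ht.2)) hf_nonneg) hft

lemma le_primitive_of_nonneg (hf : IntervalIntegrable f volume a b)
    (hf_nonneg : ∀ᵐ s ∂(volume.restrict (Set.Icc a b)), 0 ≤ f s)
    (hF : ∀ t, F t = c + ∫ s in a..t, f s) {t : ℝ} (ht : t ∈ Set.Icc a b) : c ≤ F t := by
  have hFa : F a = c := by simp [hF]
  exact hFa ▸ monotoneOn_primitive_of_nonneg hf hf_nonneg hF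
    (Set.left_mem_Icc.2 (ht.1.trans ht.2)) ht ht.1

lemma intervalIntegrable_div_primitive (hab : a ≤ b) (hc : 0 < c)
    (hf : IntervalIntegrable f volume a b)
    (hf_nonneg : ∀ᵐ s ∂(volume.restrict (Set.Icc a b)), 0 ≤ f s)
    (hF : ∀ t, F t = c + ∫ s in a..t, f s) :
    IntervalIntegrable (fun s => f s / F s) volume a b := by
  have hcont : ContinuousOn F (Set.uIcc a b) := by
    rw [funext hF]
    exact continuousOn_const.add
      (intervalIntegral.continuousOn_primitive_interval' hf Set.left_mem_uIcc)
  simp only [div_eq_mul_inv]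
  refine hf.mul_continuousOn (hcont.inv₀ fun s hs => ?_)
  rw [Set.uIcc_of_le hab] at hs
  exact (hc.trans_le (le_primitive_of_nonneg hf hf_nonneg hF hs)).ne'

lemma integral_div_primitive_le_log_div (hab : a ≤ b) (hc : 0 < c)
    (hf : IntervalIntegrable f volume a b)
    (hf_nonneg : ∀ᵐ s ∂(volume.restrict (Set.Icc a b)), 0 ≤ f s)
    (hF : ∀ t, F t = c + ∫ s in a..t, f s) :
    ∫ s in a..b, f s / F s ≤ log (F b / c) := by
  have hFa : F a = c := by simp [hF]
  have hF_pos : ∀ s ∈ Set.uIcc a b, 0 < F s := fun s hs =>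
    hc.trans_le (le_primitive_of_nonneg hf hf_nonneg hF (Set.uIcc_of_le hab ▸ hs))
  have hlog : MonotoneOn (fun s => log (F s)) (Set.uIcc a b) := fun s hs t ht hst =>
    log_le_log (hF_pos s hs) <| monotoneOn_primitive_of_nonneg hf hf_nonneg hF
      (Set.uIcc_of_le hab ▸ hs) (Set.uIcc_of_le hab ▸ ht) hst
  have hderiv : ∫ s in a..b, f s / F s = ∫ s in a..b, deriv (fun t => log (F t)) s := by
    apply intervalIntegral.integral_congr_ae
    filter_upwards [hf.ae_hasDerivAt_integral] with s hs hsm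
    have hs_mem := Set.uIoc_subset_uIcc hsm
    have hFs : HasDerivAt F (f s) s := by
      rw [funext hF]
      exact (hs hs_mem a Set.left_mem_uIcc).const_add c
    exact (hFs.log (hF_pos s hs_mem).ne').deriv.symm
  have hle : log (F a) ≤ log (F b) := hlog Set.left_mem_uIcc Set.right_mem_uIcc hab
  rw [hderiv, log_div (hF_pos b Set.right_mem_uIcc).ne' hc.ne', ← hFa]
  have hmem := hlog.intervalIntegral_deriv_mem_uIcc
  rw [Set.uIcc_of_le (sub_nonneg.2 hle)] at hmem
  exact hmem.2

end Primitive

section Greedy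

variable {ι : Type*} [Fintype ι]

/-- A feasible division of one unit of the good among the agents at a single instant. -/
def IsFeasibleShare (y : ι → ℝ) : Prop :=
  (∀ a, 0 ≤ y a) ∧ ∑ a, y a ≤ 1

/-- The Nashian Greedy condition at a single instant: with current valuations `v` and utilities
`U`, the whole unit is allocated, and only to agents maximising `v a / U a` (written without
division). -/
def IsNashianGreedy (v U x : ι → ℝ) : Prop :=
  ∑ a, x a = 1 ∧ ∀ a b, 0 < x a → v a * U b ≥ v b * U a

lemma IsFeasibleShare.le_one {y : ι → ℝ} (hy : IsFeasibleShare y) (a : ι) : y a ≤ 1 :=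
  (Finset.single_le_sum (fun b _ => hy.1 b) (Finset.mem_univ a)).trans hy.2

lemma IsNashianGreedy.div_le_sum_mul_div {v U x : ι → ℝ} (h : IsNashianGreedy v U x)
    (hx : ∀ a, 0 ≤ x a) (hU : ∀ a, 0 < U a) (b : ι) :
    v b / U b ≤ ∑ a, v a * x a / U a := by
  calc v b / U b = ∑ a, x a * (v b / U b) := by rw [← Finset.sum_mul, h.1, one_mul]
    _ ≤ ∑ a, v a * x a / U a := by
      refine Finset.sum_le_sum fun a _ => ?_
      rcases (hx a).eq_or_lt with hxa | hxa
      · simp [← hxa]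
      · rw [mul_comm (v a), mul_div_assoc]
        gcongr x a * ?_
        exact (div_le_div_iff₀ (hU b) (hU a)).2 (h.2 a b hxa)

lemma IsNashianGreedy.sum_mul_div_le_sum_mul_div {v U u x y : ι → ℝ} (h : IsNashianGreedy v U x)
    (hv : ∀ a, 0 ≤ v a) (hx : ∀ a, 0 ≤ x a) (hy : IsFeasibleShare y) (hU : ∀ a, 0 < U a)
    (hUu : ∀ a, U a ≤ u a) :
    ∑ a, v a * y a / u a ≤ ∑ a, v a * x a / U a := by
  have hrate_nonneg : 0 ≤ ∑ a, v a * x a / U a :=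
    Finset.sum_nonneg fun a _ => div_nonneg (mul_nonneg (hv a) (hx a)) (hU a).le
  calc ∑ b, v b * y b / u b
      ≤ ∑ b, y b * ∑ a, v a * x a / U a := by
        refine Finset.sum_le_sum fun b _ => ?_
        rw [mul_comm (v b), mul_div_assoc]
        refine mul_le_mul_of_nonneg_left ?_ (hy.1 b)
        exact (div_le_div_of_nonneg_left (hv b) (hU b) (hUu b)).trans
          (h.div_le_sum_mul_div hx hU b)
    _ = (∑ b, y b) * ∑ a, v a * x a / U a := by rw [Finset.sum_mul]
    _ ≤ ∑ a, v a * x a / U a := mul_le_of_le_one_left hrate_nonneg hy.2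

end Greedy

section Utility

variable {T : ℝ} {f y : ℝ → ℝ}

lemma intervalIntegrable_mul_of_mem_Icc (hT : 0 ≤ T) (hf : IntegrableOn f (Set.Icc 0 T))
    (hy_meas : AEStronglyMeasurable y (volume.restrict (Set.Icc 0 T)))
    (hy : ∀ᵐ s ∂(volume.restrict (Set.Icc 0 T)), y s ∈ Set.Icc 0 1) :
    IntervalIntegrable (fun s => f s * y s) volume 0 T := by
  rw [intervalIntegrable_iff_integrableOn_Icc_of_le hT]
  refine hf.mul_bdd (c := 1) hy_meas ?_
  filter_upwards [hy] with s hs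
  rw [norm_of_nonneg hs.1]
  exact hs.2

lemma integral_mul_le_integral_of_mem_Icc (hT : 0 ≤ T) (hf : IntegrableOn f (Set.Icc 0 T))
    (hf_nonneg : ∀ᵐ s ∂(volume.restrict (Set.Icc 0 T)), 0 ≤ f s)
    (hy_meas : AEStronglyMeasurable y (volume.restrict (Set.Icc 0 T)))
    (hy : ∀ᵐ s ∂(volume.restrict (Set.Icc 0 T)), y s ∈ Set.Icc 0 1) :
    ∫ s in (0 : ℝ)..T, f s * y s ≤ ∫ s in (0 : ℝ)..T, f s := by
  refine intervalIntegral.integral_mono_ae_restrict hT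
    (intervalIntegrable_mul_of_mem_Icc hT hf hy_meas hy)
    ((intervalIntegrable_iff_integrableOn_Icc_of_le hT).2 hf) ?_
  filter_upwards [hf_nonneg, hy] with s hfs hys
  exact mul_le_of_le_one_right hfs hys.2

lemma integral_mul_div_utility_le_log {c : ℝ} {V : ℝ → ℝ} (hT : 0 ≤ T) (hc : 0 < c)
    (hf : IntegrableOn f (Set.Icc 0 T))
    (hf_nonneg : ∀ᵐ s ∂(volume.restrict (Set.Icc 0 T)), 0 ≤ f s)
    (hf_le : ∫ s in (0 : ℝ)..T, f s ≤ 1)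
    (hy_meas : AEStronglyMeasurable y (volume.restrict (Set.Icc 0 T)))
    (hy : ∀ᵐ s ∂(volume.restrict (Set.Icc 0 T)), y s ∈ Set.Icc 0 1)
    (hV : ∀ t, V t = c + ∫ s in (0 : ℝ)..t, f s * y s) :
    ∫ s in (0 : ℝ)..T, f s * y s / V s ≤ log (1 / c + 1) := by
  have hfy := intervalIntegrable_mul_of_mem_Icc hT hf hy_meas hy
  have hfy_nonneg : ∀ᵐ s ∂(volume.restrict (Set.Icc 0 T)), 0 ≤ f s * y s := by
    filter_upwards [hf_nonneg, hy] with s hfs hys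
    exact mul_nonneg hfs hys.1
  have hVT : 0 < V T :=
    hc.trans_le (le_primitive_of_nonneg hfy hfy_nonneg hV (Set.right_mem_Icc.2 hT))
  refine (integral_div_primitive_le_log_div hT hc hfy hfy_nonneg hV).trans
    (log_le_log (by positivity) ?_)
  rw [div_le_iff₀ hc, hV T, add_mul, one_div_mul_cancel hc.ne', one_mul, add_comm]
  gcongr
  exact (integral_mul_le_integral_of_mem_Icc hT hf hf_nonneg hy_meas hy).trans hf_le

variable {ι : Type*} [Fintype ι]

lemma sum_utility_div_le_sum_integral_div {c : ℝ} {v x xstar U : ι → ℝ → ℝ} (hT : 0 ≤ T)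
    (hc : 0 < c)
    (hv_nonneg : ∀ a, ∀ᵐ s ∂(volume.restrict (Set.Icc 0 T)), 0 ≤ v a s)
    (hvx : ∀ a, IntervalIntegrable (fun s => v a s * x a s) volume 0 T)
    (hx_nonneg : ∀ᵐ s ∂(volume.restrict (Set.Icc 0 T)), ∀ a, 0 ≤ x a s)
    (hU : ∀ a t, U a t = c + ∫ s in (0 : ℝ)..t, v a s * x a s)
    (hgreedy : ∀ᵐ s ∂(volume.restrict (Set.Icc 0 T)),
      IsNashianGreedy (v · s) (U · s) (x · s))
    (hvxstar : ∀ a, IntervalIntegrable (fun s => v a s * xstar a s) volume 0 T)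
    (hxstar : ∀ᵐ s ∂(volume.restrict (Set.Icc 0 T)), IsFeasibleShare (xstar · s)) :
    ∑ a, (∫ s in (0 : ℝ)..T, v a s * xstar a s) / U a T ≤
      ∑ a, ∫ s in (0 : ℝ)..T, v a s * x a s / U a s := by
  have hvx_nonneg : ∀ a, ∀ᵐ s ∂(volume.restrict (Set.Icc 0 T)), 0 ≤ v a s * x a s := fun a => by
    filter_upwards [hv_nonneg a, hx_nonneg] with s hvs hxs
    exact mul_nonneg hvs (hxs a)
  have hstar : ∀ a, IntervalIntegrable (fun s => v a s * xstar a s / U a T) volume 0 T :=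
    fun a => (hvxstar a).div_const _
  have hrate : ∀ a, IntervalIntegrable (fun s => v a s * x a s / U a s) volume 0 T :=
    fun a => intervalIntegrable_div_primitive hT hc (hvx a) (hvx_nonneg a) (hU a)
  simp only [← intervalIntegral.integral_div]
  rw [← intervalIntegral.integral_finsetSum fun a _ => hstar a,
    ← intervalIntegral.integral_finsetSum fun a _ => hrate a]
  refine intervalIntegral.integral_mono_ae_restrict hT
    (by simpa only [Finset.sum_fn] using IntervalIntegrable.sum Finset.univ fun a _ => hstar a)
    (by simpa only [Finset.sum_fn] using IntervalIntegrable.sum Finset.univ fun a _ => hrate a) ?_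
  filter_upwards [ae_all_iff.2 hv_nonneg, hx_nonneg, hgreedy, hxstar,
    ae_restrict_mem measurableSet_Icc] with s hvs hxs hgs hxstars hs
  exact hgs.sum_mul_div_le_sum_mul_div hvs hxs hxstars
    (fun a => hc.trans_le (le_primitive_of_nonneg (hvx a) (hvx_nonneg a) (hU a) hs))
    (fun a => monotoneOn_primitive_of_nonneg (hvx a) (hvx_nonneg a) (hU a) hs
      (Set.right_mem_Icc.2 hT) hs.2)

end Utility

theorem stmt_7_general {ι : Type*} [Fintype ι] [Nonempty ι] {c T : ℝ} (hc : 0 < c) (hT : 0 ≤ T)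
    (v : ι → ℝ → ℝ)
    (hv_nonneg : ∀ a, ∀ᵐ s ∂(volume.restrict (Set.Icc 0 T)), 0 ≤ v a s)
    (hv_int : ∀ a, IntegrableOn (v a) (Set.Icc 0 T))
    (hv_le : ∀ a, ∫ s in (0 : ℝ)..T, v a s ≤ 1)
    (x : ι → ℝ → ℝ)
    (hx_meas : ∀ a, AEStronglyMeasurable (x a) (volume.restrict (Set.Icc 0 T)))
    (hx_feas : ∀ᵐ s ∂(volume.restrict (Set.Icc 0 T)), IsFeasibleShare (x · s))
    (U : ι → ℝ → ℝ)
    (hU : ∀ a t, U a t = c + ∫ s in (0 : ℝ)..t, v a s * x a s)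
    (hgreedy : ∀ᵐ s ∂(volume.restrict (Set.Icc 0 T)),
      IsNashianGreedy (v · s) (U · s) (x · s))
    {p : ℝ} (hp : p < 0)
    (xstar : ι → ℝ → ℝ)
    (hxstar_meas : ∀ a, AEStronglyMeasurable (xstar a) (volume.restrict (Set.Icc 0 T)))
    (hxstar_feas : ∀ᵐ s ∂(volume.restrict (Set.Icc 0 T)), IsFeasibleShare (xstar · s))
    (Ustar : ι → ℝ)
    (hUstar : ∀ a, Ustar a = ∫ s in (0 : ℝ)..T, v a s * xstar a s)
    (hUstar_pos : ∀ a, 0 < Ustar a) :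
    c ^ (|p| / (|p| + 1)) * log (1 / c + 1) ^ (-(1 / (|p| + 1))) * powerMean p Ustar ≤
      powerMean p (U · T) := by
  have hx : ∀ a, ∀ᵐ s ∂(volume.restrict (Set.Icc 0 T)), x a s ∈ Set.Icc 0 1 := fun a =>
    hx_feas.mono fun s hs => ⟨hs.1 a, hs.le_one a⟩
  have hxstar : ∀ a, ∀ᵐ s ∂(volume.restrict (Set.Icc 0 T)), xstar a s ∈ Set.Icc 0 1 := fun a =>
    hxstar_feas.mono fun s hs => ⟨hs.1 a, hs.le_one a⟩
  have hvx := fun a => intervalIntegrable_mul_of_mem_Icc hT (hv_int a) (hx_meas a) (hx a)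
  have hUT : ∀ a, c ≤ U a T := fun a =>
    le_primitive_of_nonneg (hvx a)
      (by filter_upwards [hv_nonneg a, hx a] with s hvs hxs using mul_nonneg hvs hxs.1)
      (hU a) (Set.right_mem_Icc.2 hT)
  have hUstar_le : ∀ a, Ustar a ≤ 1 := fun a => (hUstar a).trans_le <|
    (integral_mul_le_integral_of_mem_Icc hT (hv_int a) (hv_nonneg a) (hxstar_meas a)
      (hxstar a)).trans (hv_le a)
  have hL : 0 < log (1 / c + 1) := log_pos (by linarith [one_div_pos.2 hc])
  refine powerMean_ge_of_sum_div_le hp hc hL hUT hUstar_pos hUstar_le ?_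
  calc ∑ a, Ustar a / U a T
      = ∑ a, (∫ s in (0 : ℝ)..T, v a s * xstar a s) / U a T := by simp only [hUstar]
    _ ≤ ∑ a, ∫ s in (0 : ℝ)..T, v a s * x a s / U a s :=
        sum_utility_div_le_sum_integral_div hT hc hv_nonneg hvx
          (hx_feas.mono fun s hs => hs.1) hU hgreedy
          (fun a => intervalIntegrable_mul_of_mem_Icc hT (hv_int a) (hxstar_meas a) (hxstar a))
          hxstar_feas
    _ ≤ ∑ _a : ι, log (1 / c + 1) := Finset.sum_le_sum fun a _ =>
        integral_mul_div_utility_le_log hT hc (hv_int a) (hv_nonneg a) (hv_le a) (hx_meas a)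
          (hx a) (hU a)
    _ = Fintype.card ι * log (1 / c + 1) := by simp

theorem stmt_7
    (n : ℕ) (hn : 1 ≤ n) (T : ℝ) (hT : 0 < T)
    (v : Fin n → ℝ → ℝ)
    (hv_meas : ∀ a, Measurable (v a))
    (hv_nonneg : ∀ a, ∀ᵐ s ∂(volume.restrict (Set.Icc (0:ℝ) T)), 0 ≤ v a s)
    (hv_int : ∀ a, IntegrableOn (v a) (Set.Icc (0:ℝ) T))
    (hv_unit : ∀ a, ∫ s in (0:ℝ)..T, v a s = 1)
    (x : Fin n → ℝ → ℝ)
    (hx_meas : ∀ a, Measurable (x a))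
    (hx_feas : ∀ᵐ s ∂(volume.restrict (Set.Icc (0:ℝ) T)),
      (∀ a, 0 ≤ x a s) ∧ ∑ a, x a s ≤ 1)
    (U : Fin n → ℝ → ℝ)
    (hU : ∀ a t, U a t = 1 / (n : ℝ) + ∫ s in (0:ℝ)..t, v a s * x a s)
    (hgreedy : ∀ᵐ s ∂(volume.restrict (Set.Icc (0:ℝ) T)),
      (∑ a, x a s = 1) ∧
      ∀ a b, 0 < x a s → v a s * U b s ≥ v b s * U a s)
    (p : ℝ) (hp_lb : -1 ≤ p) (hp : p < 0)
    (xstar : Fin n → ℝ → ℝ)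
    (hxstar_meas : ∀ a, Measurable (xstar a))
    (hxstar_feas : ∀ᵐ s ∂(volume.restrict (Set.Icc (0:ℝ) T)),
      (∀ a, 0 ≤ xstar a s) ∧ ∑ a, xstar a s ≤ 1)
    (Ustar : Fin n → ℝ)
    (hUstar : ∀ a, Ustar a = ∫ s in (0:ℝ)..T, v a s * xstar a s)
    (hUstar_pos : ∀ a, 0 < Ustar a)
    (W : ℝ) (hW : W = ((1 / (n : ℝ)) * ∑ a, (Ustar a) ^ p) ^ (1 / p)) :
    ((1 / (n : ℝ)) * ∑ a, (U a T) ^ p) ^ (1 / p) ≥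
      (|p| / (|p| + 1)) ^ (1 / |p|) * (n : ℝ) ^ (-(|p| / (|p| + 1))) *
        (Real.log ((n : ℝ) + 1)) ^ (-(1 / (|p| + 1))) * W := by
  have hn_pos : (0 : ℝ) < n := Nat.cast_pos.2 hn
  have : Nonempty (Fin n) := ⟨⟨0, hn⟩⟩
  have hmain := stmt_7_general (one_div_pos.2 hn_pos) hT.le v hv_nonneg hv_int
    (fun a => (hv_unit a).le) x (fun a => (hx_meas a).aestronglyMeasurable) hx_feas U hU hgreedy hp
    xstar (fun a => (hxstar_meas a).aestronglyMeasurable) hxstar_feas Ustar hUstar hUstar_pos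
  have hW_nonneg : 0 ≤ W := by
    simpa [hW, powerMean] using powerMean_nonneg p fun a => (hUstar_pos a).le
  have hfactor : (|p| / (|p| + 1)) ^ (1 / |p|) ≤ 1 :=
    rpow_le_one (by positivity) (div_le_one_of_le₀ (by linarith) (by positivity)) (by positivity)
  have hlog : 0 ≤ log ((n : ℝ) + 1) := log_nonneg (by linarith)
  rw [one_div_one_div, one_div (n : ℝ), inv_rpow hn_pos.le, ← rpow_neg hn_pos.le] at hmain
  simp only [powerMean, Fintype.card_fin, ← hW] at hmain
  refine le_trans ?_ hmain
  rw [mul_assoc, mul_assoc, ← mul_assoc ((n : ℝ) ^ _)]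
  exact mul_le_of_le_one_left (by positivity) hfactor
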